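/- The map Δ : V⁴ → S₂(Λ²V) given by Δ(w, x, y, z) = (w ∧ x)(y ∧ z) + (w ∧ y)(z ∧ x) + (w ∧ z)(x ∧ y), where V is a 4-dimensional vector space over a field of characteristic 2, is multilinear and alternating in its four arguments. -/

import Mathlib

open Module

/-- The wedge `v ∧ w` as an element of the second exterior power `⋀[𝔽]^2 V`. -/
noncomputable def wedge2 (𝔽 : Type*) {V : Type*} [Field 𝔽] [AddCommGroup V] [Module 𝔽 V]
    (v w : V) : ⋀[𝔽]^2 V :=
  ⟨ExteriorAlgebra.ιMulti 𝔽 2 ![v, w],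
   ExteriorAlgebra.ιMulti_range 𝔽 2 (Set.mem_range_self _)⟩

/-- The wedge `v₁ ∧ v₂ ∧ v₃ ∧ v₄` as an element of the fourth exterior power `⋀[𝔽]^4 V`. -/
noncomputable def wedge4 (𝔽 : Type*) {V : Type*} [Field 𝔽] [AddCommGroup V] [Module 𝔽 V]
    (v₁ v₂ v₃ v₄ : V) : ⋀[𝔽]^4 V :=
  ⟨ExteriorAlgebra.ιMulti 𝔽 4 ![v₁, v₂, v₃, v₄],
   ExteriorAlgebra.ιMulti_range 𝔽 4 (Set.mem_range_self _)⟩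

/-- The wedge product `⋀[𝔽]^2 V × ⋀[𝔽]^2 V → ⋀[𝔽]^4 V`. -/
noncomputable def wmul {𝔽 V : Type*} [Field 𝔽] [AddCommGroup V] [Module 𝔽 V]
    (a b : ⋀[𝔽]^2 V) : ⋀[𝔽]^4 V :=
  ⟨a.1 * b.1, by
    have h : (⋀[𝔽]^4 V) = ⋀[𝔽]^2 V * ⋀[𝔽]^2 V := by
      rw [show (4 : ℕ) = 2 + 2 by norm_num]
      exact pow_add _ 2 2
    exact h ▸ Submodule.mul_mem_mul a.2 b.2⟩

/-- The relation submodule defining the symmetric square. -/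
def symRel (𝔽 W : Type*) [Field 𝔽] [AddCommGroup W] [Module 𝔽 W] :
    Submodule 𝔽 (TensorProduct 𝔽 W W) :=
  Submodule.span 𝔽 {x | ∃ v w : W, x = v ⊗ₜ[𝔽] w - w ⊗ₜ[𝔽] v}

/-- The symmetric square `S₂(W) = (W ⊗ W)/⟨v⊗w − w⊗v⟩`. -/
abbrev SymSq (𝔽 W : Type*) [Field 𝔽] [AddCommGroup W] [Module 𝔽 W] :=
  TensorProduct 𝔽 W W ⧸ symRel 𝔽 W

/-- The symmetric product `vw ∈ S₂(W)`. -/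
noncomputable def symMul (𝔽 : Type*) {W : Type*} [Field 𝔽] [AddCommGroup W] [Module 𝔽 W] (v w : W) :
    SymSq 𝔽 W :=
  Submodule.Quotient.mk (v ⊗ₜ[𝔽] w)

/-- The square `w² ∈ S₂(W)`. -/
noncomputable def sqS (𝔽 : Type*) {W : Type*} [Field 𝔽] [AddCommGroup W] [Module 𝔽 W] (w : W) : SymSq 𝔽 W :=
  symMul 𝔽 w w

/-- The element `U(w,x,y,z) = (w∧x)(y∧z) + (w∧y)(z∧x) + (w∧z)(x∧y) ∈ S₂(Λ²V)`. -/
noncomputable def Udef (𝔽 : Type*) {V : Type*} [Field 𝔽] [AddCommGroup V] [Module 𝔽 V]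
    (w x y z : V) : SymSq 𝔽 (⋀[𝔽]^2 V) :=
  symMul 𝔽 (wedge2 𝔽 w x) (wedge2 𝔽 y z) + symMul 𝔽 (wedge2 𝔽 w y) (wedge2 𝔽 z x) +
    symMul 𝔽 (wedge2 𝔽 w z) (wedge2 𝔽 x y)

section Wedge

variable {𝔽 V : Type*} [Field 𝔽] [AddCommGroup V] [Module 𝔽 V]

theorem coe_wedge2 (v w : V) :
    (wedge2 𝔽 v w : ExteriorAlgebra 𝔽 V) = ExteriorAlgebra.ι 𝔽 v * ExteriorAlgebra.ι 𝔽 w := by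
  simp [wedge2, ExteriorAlgebra.ιMulti_apply]

theorem wedge2_add_left (v v' w : V) :
    wedge2 𝔽 (v + v') w = wedge2 𝔽 v w + wedge2 𝔽 v' w :=
  Subtype.ext <| by simp [coe_wedge2, add_mul]

theorem wedge2_add_right (v w w' : V) :
    wedge2 𝔽 v (w + w') = wedge2 𝔽 v w + wedge2 𝔽 v w' :=
  Subtype.ext <| by simp [coe_wedge2, mul_add]

theorem wedge2_smul_left (c : 𝔽) (v w : V) : wedge2 𝔽 (c • v) w = c • wedge2 𝔽 v w :=
  Subtype.ext <| by simp [coe_wedge2]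

theorem wedge2_smul_right (c : 𝔽) (v w : V) : wedge2 𝔽 v (c • w) = c • wedge2 𝔽 v w :=
  Subtype.ext <| by simp [coe_wedge2]

theorem wedge2_self (v : V) : wedge2 𝔽 v v = 0 :=
  Subtype.ext <| by simp [coe_wedge2]

theorem wedge2_swap (v w : V) : wedge2 𝔽 v w = -wedge2 𝔽 w v := by
  have h := wedge2_self (𝔽 := 𝔽) (v + w)
  rw [wedge2_add_left, wedge2_add_right, wedge2_add_right, wedge2_self, wedge2_self, zero_add,
    add_zero] at h
  exact eq_neg_of_add_eq_zero_left h

end Wedge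

section SymMul

variable {𝔽 W : Type*} [Field 𝔽] [AddCommGroup W] [Module 𝔽 W]

theorem symMul_comm (a b : W) : symMul 𝔽 a b = symMul 𝔽 b a :=
  (Submodule.Quotient.eq _).2 (Submodule.subset_span ⟨a, b, rfl⟩)

theorem symMul_add_left (a a' b : W) :
    symMul 𝔽 (a + a') b = symMul 𝔽 a b + symMul 𝔽 a' b := by
  simp [symMul, TensorProduct.add_tmul]

theorem symMul_add_right (a b b' : W) :
    symMul 𝔽 a (b + b') = symMul 𝔽 a b + symMul 𝔽 a b' := by
  simp [symMul, TensorProduct.tmul_add]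

theorem symMul_smul_left (c : 𝔽) (a b : W) : symMul 𝔽 (c • a) b = c • symMul 𝔽 a b := by
  rw [symMul, ← TensorProduct.smul_tmul', Submodule.Quotient.mk_smul, symMul]

theorem symMul_smul_right (c : 𝔽) (a b : W) : symMul 𝔽 a (c • b) = c • symMul 𝔽 a b := by
  simp [symMul]

theorem symMul_zero_left (b : W) : symMul 𝔽 0 b = 0 := by
  simp [symMul]

theorem symMul_zero_right (a : W) : symMul 𝔽 a 0 = 0 := by
  simp [symMul]

theorem symMul_neg_right (a b : W) : symMul 𝔽 a (-b) = -symMul 𝔽 a b := by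
  simp [symMul, TensorProduct.tmul_neg]

end SymMul

section Udef

variable {𝔽 V : Type*} [Field 𝔽] [AddCommGroup V] [Module 𝔽 V]

theorem Udef_self_left (w y z : V) : Udef 𝔽 w w y z = 0 := by
  simp only [Udef, wedge2_self, symMul_zero_left, zero_add]
  rw [wedge2_swap z w, symMul_neg_right, symMul_comm (wedge2 𝔽 w z), neg_add_cancel]

theorem Udef_self_middle (w x z : V) : Udef 𝔽 w x x z = 0 := by
  simp only [Udef, wedge2_self, symMul_zero_right, add_zero]
  rw [wedge2_swap z x, symMul_neg_right, add_neg_cancel]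

theorem Udef_cycle (w x y z : V) : Udef 𝔽 w x y z = Udef 𝔽 w y z x := by
  simp only [Udef]
  abel

/-- `Udef` as an alternating map. -/
noncomputable def UdefAlternating (𝔽 V : Type*) [Field 𝔽] [AddCommGroup V] [Module 𝔽 V] :
    V [⋀^Fin 4]→ₗ[𝔽] SymSq 𝔽 (⋀[𝔽]^2 V) where
  toMultilinearMap := MultilinearMap.mk' (fun v => Udef 𝔽 (v 0) (v 1) (v 2) (v 3))
    (fun v i a b => by
      fin_cases i <;>
        simp [Udef, wedge2_add_left, wedge2_add_right, symMul_add_left, symMul_add_right] <;>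
        abel)
    (fun v i c a => by
      fin_cases i <;>
        simp [Udef, wedge2_smul_left, wedge2_smul_right, symMul_smul_left, symMul_smul_right])
  map_eq_zero_of_eq' v i j h hij := by
    wlog hlt : i < j generalizing i j
    · exact this j i h.symm hij.symm (lt_of_le_of_ne (not_lt.1 hlt) hij.symm)
    have h₁ (w y z : V) : Udef 𝔽 w y w z = 0 := by
      rw [Udef_cycle, Udef_self_left]
    have h₂ (w y z : V) : Udef 𝔽 w y z w = 0 := by
      rw [Udef_cycle, h₁]
    have h₃ (w x y : V) : Udef 𝔽 w x y y = 0 := by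
      rw [Udef_cycle, Udef_self_middle]
    have h₄ (w x y : V) : Udef 𝔽 w x y x = 0 := by
      rw [Udef_cycle, h₃]
    fin_cases i <;> fin_cases j <;> simp at hlt h <;>
      simp [h, Udef_self_left, Udef_self_middle, h₁, h₂, h₃, h₄]

end Udef

/-- the map `Δ(w,x,y,z) = (w∧x)(y∧z) + (w∧y)(z∧x) + (w∧z)(x∧y)` into
`S₂(Λ²V)` is 4-linear and alternating (for `dim V = 4` in characteristic 2), i.e. it is
given by an alternating map. -/
theorem Udef_multilinear_alternating {𝔽 V : Type*} [Field 𝔽] [CharP 𝔽 2]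
    [AddCommGroup V] [Module 𝔽 V] [FiniteDimensional 𝔽 V] (hV : Module.finrank 𝔽 V = 4) :
    ∃ A : V [⋀^Fin 4]→ₗ[𝔽] SymSq 𝔽 (⋀[𝔽]^2 V),
      ∀ w x y z : V, A ![w, x, y, z] = Udef 𝔽 w x y z := by
  exact ⟨UdefAlternating 𝔽 V, fun _ _ _ _ => rfl⟩
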